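/- Let u : ℝ^3 → ℂ be smooth, radial, and rapidly decaying, and let f₀ : [0,∞) → [0,∞) be smooth, nondecreasing, with f₀ = 0 on [0, m] and f₀ bounded. Then ∫_{|x|>m} f₀(|x|) |u(x)|⁶ dx ≤ C ∫_m^∞ f₀'(s) ‖u‖⁶_{L⁶(|x|>s)} ds + f₀(∞) · 0, and furthermore using ‖u‖⁶_{L⁶(|x|>s)} ≤ C s^{−4} ‖∇u‖²_{L²(|x|>s)} ‖u‖⁴_{L²(|x|>s)} one gets ∫_{|x|>m} f₀(|x|)|u|⁶ dx ≤ C m^{−4} ‖u‖⁴_{L²} ∫_{|x|>m} f₀(|x|) |∂_r u|² dx. -/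

import Mathlib

open MeasureTheory Set Filter Topology

lemma SchwartzMap.integrable_pow_mul_norm_mul_norm (f h : SchwartzMap ℝ ℂ) (k : ℕ) :
    Integrable (fun x : ℝ => x ^ k * (‖f x‖ * ‖h x‖)) := by
  have h1 : Integrable (fun x : ℝ => (x ^ k * ‖f x‖) * ‖h x‖) := by
    refine Integrable.mul_bdd (c := SchwartzMap.seminorm ℝ 0 0 h) ?_ ?_ ?_
    · refine (f.integrable_pow_mul volume k).mono' ?_ (ae_of_all _ fun x => ?_)
      · exact ((continuous_id.pow k).mul f.continuous.norm).aestronglyMeasurable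
      · simp
    · exact h.continuous.norm.aestronglyMeasurable
    · exact ae_of_all _ fun x => by simpa using h.norm_le_seminorm ℝ x
  simpa only [mul_assoc] using h1

lemma SchwartzMap.sq_mul_norm_sq_le (g : SchwartzMap ℝ ℂ) {r : ℝ} (hr : 0 < r) :
    r ^ 2 * ‖g r‖ ^ 2 ≤ 2 * ∫ s in Ioi r, s ^ 2 * (‖g s‖ * ‖deriv g s‖) := by
  have hd : ∀ s, HasDerivAt (fun s => ‖g s‖ ^ 2) (2 * inner ℝ (g s) (deriv g s)) s := fun s =>
    g.differentiable.differentiableAt.hasDerivAt.norm_sq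
  have hg' : ∀ s, deriv g s = SchwartzMap.derivCLM ℝ ℂ g s := fun s => rfl
  have hbound : ∀ s, |inner ℝ (g s) (deriv g s)| ≤ ‖g s‖ * ‖deriv g s‖ := fun s =>
    abs_real_inner_le_norm _ _
  have hcont : Continuous (deriv g) := by
    have := (SchwartzMap.derivCLM ℝ ℂ g).continuous
    exact this
  have hint0 : Integrable (fun s => ‖g s‖ * ‖deriv g s‖) := by
    simpa using g.integrable_pow_mul_norm_mul_norm (SchwartzMap.derivCLM ℝ ℂ g) 0
  have hint2 : Integrable (fun s => s ^ 2 * (‖g s‖ * ‖deriv g s‖)) :=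
    g.integrable_pow_mul_norm_mul_norm (SchwartzMap.derivCLM ℝ ℂ g) 2
  have hint : Integrable (fun s => 2 * inner ℝ (g s) (deriv g s)) := by
    refine (hint0.mono' ?_ (ae_of_all _ hbound)).const_mul 2
    exact (g.continuous.inner hcont).aestronglyMeasurable
  have hlim : Tendsto (fun s => ‖g s‖ ^ 2) atTop (𝓝 0) := by
    have h1 : Tendsto g atTop (𝓝 0) := g.tendsto_cocompact.mono_left atTop_le_cocompact
    simpa using h1.norm.pow 2
  have hftc := integral_Ioi_of_hasDerivAt_of_tendsto' (a := r) (fun s _ => hd s)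
    hint.integrableOn hlim
  have hsq : r ^ 2 * ‖g r‖ ^ 2 = ∫ s in Ioi r, r ^ 2 * -(2 * inner ℝ (g s) (deriv g s)) := by
    rw [integral_const_mul, integral_neg, hftc]; ring
  rw [hsq, ← integral_const_mul]
  refine setIntegral_mono_on (hint.neg.const_mul _).integrableOn (hint2.const_mul _).integrableOn
    measurableSet_Ioi fun s hs => ?_
  have h1 : -(inner ℝ (g s) (deriv g s)) ≤ ‖g s‖ * ‖deriv g s‖ :=
    (neg_le_abs _).trans (hbound s)
  have h2 : r ^ 2 ≤ s ^ 2 := by gcongr; exact le_of_lt hs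
  have h3 : 0 ≤ ‖g s‖ * ‖deriv g s‖ := by positivity
  nlinarith [mul_le_mul_of_nonneg_left h1 (sq_nonneg r), mul_le_mul_of_nonneg_right h2 h3]

lemma sq_integral_mul_le {α : Type*} [MeasurableSpace α] {μ : Measure α} {a b : α → ℝ}
    (ha : 0 ≤ᵐ[μ] a) (hb : 0 ≤ᵐ[μ] b) (ha2 : MemLp a 2 μ) (hb2 : MemLp b 2 μ) :
    (∫ x, a x * b x ∂μ) ^ 2 ≤ (∫ x, a x ^ 2 ∂μ) * ∫ x, b x ^ 2 ∂μ := by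
  have h := integral_mul_le_Lp_mul_Lq_of_nonneg Real.HolderConjugate.two_two ha hb
    (by simpa using ha2) (by simpa using hb2)
  simp only [Real.rpow_two, ← Real.sqrt_eq_rpow] at h
  have h0 : 0 ≤ ∫ x, a x * b x ∂μ := integral_nonneg_of_ae (by
    filter_upwards [ha, hb] with x h1 h2 using mul_nonneg h1 h2)
  calc (∫ x, a x * b x ∂μ) ^ 2
      ≤ (√(∫ x, a x ^ 2 ∂μ) * √(∫ x, b x ^ 2 ∂μ)) ^ 2 := by gcongr
    _ = _ := by
      rw [mul_pow, Real.sq_sqrt (integral_nonneg fun x => sq_nonneg _),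
        Real.sq_sqrt (integral_nonneg fun x => sq_nonneg _)]

lemma SchwartzMap.pow_four_mul_norm_pow_four_le (g : SchwartzMap ℝ ℂ) {r : ℝ} (hr : 0 < r) :
    r ^ 4 * ‖g r‖ ^ 4 ≤ 4 * (∫ s in Ioi r, s ^ 2 * ‖g s‖ ^ 2) *
      ∫ s in Ioi r, s ^ 2 * ‖deriv g s‖ ^ 2 := by
  have hmem : ∀ f : SchwartzMap ℝ ℂ,
      MemLp (fun s => s * ‖f s‖) 2 (volume.restrict (Ioi r)) := fun f => by
    have hcont : Continuous fun s => s * ‖f s‖ := continuous_id.mul f.continuous.norm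
    rw [memLp_two_iff_integrable_sq hcont.aestronglyMeasurable]
    refine ((f.integrable_pow_mul_norm_mul_norm f 2).integrableOn (s := Ioi r)).congr
      (ae_of_all _ fun s => ?_)
    ring
  have hnn : ∀ f : ℝ → ℂ, 0 ≤ᵐ[volume.restrict (Ioi r)] fun s => s * ‖f s‖ := fun f => by
    filter_upwards [ae_restrict_mem measurableSet_Ioi] with s hs
    exact mul_nonneg (hr.trans hs).le (norm_nonneg _)
  have hcs := sq_integral_mul_le (hnn g) (hnn (deriv g)) (hmem g)
    (hmem (SchwartzMap.derivCLM ℝ ℂ g))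
  have h1 := g.sq_mul_norm_sq_le hr
  have heq : ∀ s, s * ‖g s‖ * (s * ‖deriv g s‖) = s ^ 2 * (‖g s‖ * ‖deriv g s‖) :=
    fun s => by ring
  simp only [mul_pow, heq] at hcs
  calc r ^ 4 * ‖g r‖ ^ 4 = (r ^ 2 * ‖g r‖ ^ 2) ^ 2 := by ring
    _ ≤ (2 * ∫ s in Ioi r, s ^ 2 * (‖g s‖ * ‖deriv g s‖)) ^ 2 := by gcongr
    _ = 4 * (∫ s in Ioi r, s ^ 2 * (‖g s‖ * ‖deriv g s‖)) ^ 2 := by ring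
    _ ≤ _ := by rw [mul_assoc]; gcongr

lemma SchwartzMap.integral_weight_mul_norm_pow_six_le (g : SchwartzMap ℝ ℂ) {w : ℝ → ℝ} {m B : ℝ}
    (hm : 0 < m) (hw : Continuous w) (hw0 : ∀ s, 0 ≤ w s) (hwm : ∀ s ∈ Icc (0 : ℝ) m, w s = 0)
    (hmono : MonotoneOn w (Ici (0 : ℝ))) (hB : ∀ s, w s ≤ B) :
    ∫ s in Ioi (0 : ℝ), s ^ 2 * (w s * ‖g s‖ ^ 6) ≤
      4 / m ^ 4 * (∫ s in Ioi (0 : ℝ), s ^ 2 * ‖g s‖ ^ 2) ^ 2 *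
        ∫ s in Ioi (0 : ℝ), s ^ 2 * (w s * ‖deriv g s‖ ^ 2) := by
  have hsq : ∀ f : SchwartzMap ℝ ℂ, Integrable fun s => s ^ 2 * ‖f s‖ ^ 2 := fun f => by
    simpa only [sq ‖f _‖] using f.integrable_pow_mul_norm_mul_norm f 2
  have hd : Integrable fun s => s ^ 2 * ‖deriv g s‖ ^ 2 := hsq (SchwartzMap.derivCLM ℝ ℂ g)
  have hwd : Integrable fun s => s ^ 2 * (w s * ‖deriv g s‖ ^ 2) := by
    have : Integrable fun s => w s * (s ^ 2 * ‖deriv g s‖ ^ 2) :=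
      hd.bdd_mul (c := B) hw.aestronglyMeasurable (ae_of_all _ fun s => by
        rw [Real.norm_of_nonneg (hw0 s)]; exact hB s)
    refine this.congr (ae_of_all _ fun s => ?_)
    ring
  set N := ∫ s in Ioi (0 : ℝ), s ^ 2 * ‖g s‖ ^ 2 with hN
  set G := ∫ s in Ioi (0 : ℝ), s ^ 2 * (w s * ‖deriv g s‖ ^ 2) with hG
  have hN0 : 0 ≤ N := integral_nonneg fun s => by positivity
  have hG0 : 0 ≤ G := integral_nonneg fun s => by have := hw0 s; positivity
  have key : ∀ r ∈ Ioi (0 : ℝ), w r * ‖g r‖ ^ 4 ≤ 4 / m ^ 4 * N * G := by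
    intro r hr
    rcases le_or_gt r m with hrm | hrm
    · rw [hwm r ⟨le_of_lt hr, hrm⟩, zero_mul]; positivity
    have hsub : Ioi r ⊆ Ioi (0 : ℝ) := Ioi_subset_Ioi (le_of_lt hr)
    have h1 : ∫ s in Ioi r, s ^ 2 * ‖g s‖ ^ 2 ≤ N :=
      setIntegral_mono_set (hsq g).integrableOn (ae_of_all _ fun s => by positivity)
        hsub.eventuallyLE
    have h2 : w r * ∫ s in Ioi r, s ^ 2 * ‖deriv g s‖ ^ 2 ≤ G := by
      rw [← integral_const_mul]
      calc _ ≤ ∫ s in Ioi r, s ^ 2 * (w s * ‖deriv g s‖ ^ 2) := by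
            refine setIntegral_mono_on (hd.const_mul _).integrableOn hwd.integrableOn
              measurableSet_Ioi fun s hs => ?_
            have hws : w r ≤ w s := hmono (mem_Ici_of_Ioi hr) (mem_Ici_of_Ioi (hsub hs)) (le_of_lt hs)
            calc w r * (s ^ 2 * ‖deriv g s‖ ^ 2) ≤ w s * (s ^ 2 * ‖deriv g s‖ ^ 2) := by gcongr
              _ = _ := by ring
        _ ≤ G := setIntegral_mono_set hwd.integrableOn
            (ae_of_all _ fun s => by have := hw0 s; simp only [Pi.zero_apply]; positivity)
            hsub.eventuallyLE
    have h3 := g.pow_four_mul_norm_pow_four_le hr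
    have hI : 0 ≤ ∫ s in Ioi r, s ^ 2 * ‖deriv g s‖ ^ 2 := integral_nonneg fun s => by positivity
    have hwr := hw0 r
    rw [div_mul_eq_mul_div, div_mul_eq_mul_div, le_div_iff₀ (by positivity)]
    calc w r * ‖g r‖ ^ 4 * m ^ 4 ≤ w r * ‖g r‖ ^ 4 * r ^ 4 := by gcongr
      _ = w r * (r ^ 4 * ‖g r‖ ^ 4) := by ring
      _ ≤ w r * (4 * (∫ s in Ioi r, s ^ 2 * ‖g s‖ ^ 2) *
            ∫ s in Ioi r, s ^ 2 * ‖deriv g s‖ ^ 2) := by gcongr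
      _ = 4 * (∫ s in Ioi r, s ^ 2 * ‖g s‖ ^ 2) *
            (w r * ∫ s in Ioi r, s ^ 2 * ‖deriv g s‖ ^ 2) := by ring
      _ ≤ 4 * N * G := by gcongr
  calc ∫ s in Ioi (0 : ℝ), s ^ 2 * (w s * ‖g s‖ ^ 6)
      ≤ ∫ s in Ioi (0 : ℝ), 4 / m ^ 4 * N * G * (s ^ 2 * ‖g s‖ ^ 2) := by
        refine integral_mono_of_nonneg (ae_of_all _ fun s => ?_)
          ((hsq g).const_mul _).integrableOn ?_
        · have := hw0 s; simp only [Pi.zero_apply]; positivity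
        · filter_upwards [ae_restrict_mem measurableSet_Ioi] with s hs
          calc s ^ 2 * (w s * ‖g s‖ ^ 6) = w s * ‖g s‖ ^ 4 * (s ^ 2 * ‖g s‖ ^ 2) := by ring
            _ ≤ _ := mul_le_mul_of_nonneg_right (key s hs) (by positivity)
    _ = 4 / m ^ 4 * N ^ 2 * G := by rw [integral_const_mul, ← hN]; ring

/-- A bounded nondecreasing `C¹` weight has integrable derivative. -/
lemma integrableOn_deriv_of_monotoneOn_of_bounded {f : ℝ → ℝ} {m B : ℝ} (hm : 0 ≤ m)
    (hf : Differentiable ℝ f) (hmono : MonotoneOn f (Ici (0 : ℝ))) (hB : ∀ s, f s ≤ B) :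
    IntegrableOn (deriv f) (Ioi m) ∧ ∀ s ∈ Ioi m, 0 ≤ deriv f s := by
  have hpos : ∀ s ∈ Ioi m, 0 ≤ deriv f s := fun s hs => by
    have hnhds : Ici (0 : ℝ) ∈ 𝓝 s := Ici_mem_nhds (hm.trans_lt hs)
    rw [← derivWithin_of_mem_nhds hnhds]
    exact hmono.derivWithin_nonneg
  have hmono' : Monotone fun s => f (max 0 s) := fun a b hab =>
    hmono (le_max_left 0 a) (le_max_left 0 b) (max_le_max le_rfl hab)
  have hlim := tendsto_atTop_ciSup hmono' ⟨B, by rintro _ ⟨s, rfl⟩; exact hB _⟩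
  have hlim' : Tendsto f atTop (𝓝 (⨆ s, f (max 0 s))) := by
    refine hlim.congr' ?_
    filter_upwards [eventually_ge_atTop 0] with s hs
    rw [max_eq_right hs]
  exact ⟨integrableOn_Ioi_deriv_of_nonneg' (fun s _ => (hf s).hasDerivAt) hpos hlim', hpos⟩

/-- Layer-cake identity: a weight vanishing at `m` is recovered from its derivative. -/
lemma setIntegral_weight_norm_mul_eq {E : Type*} [NormedAddCommGroup E] [MeasurableSpace E]
    [BorelSpace E] {μ : Measure E} [SFinite μ] {f : ℝ → ℝ} {m : ℝ} (hf : ContDiff ℝ 1 f)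
    (hfm : f m = 0) (hint : IntegrableOn (deriv f) (Ioi m)) {φ : E → ℝ} (hφ : Integrable φ μ) :
    ∫ x in {x : E | m < ‖x‖}, f ‖x‖ * φ x ∂μ =
      ∫ s in Ioi m, deriv f s * ∫ x in {x : E | s < ‖x‖}, φ x ∂μ := by
  have hmeas : ∀ s : ℝ, MeasurableSet {x : E | s < ‖x‖} := fun s =>
    measurableSet_lt measurable_const measurable_norm
  have hprod : Integrable (Function.uncurry fun (s : ℝ) (x : E) =>
      {p : ℝ × E | p.1 < ‖p.2‖}.indicator (fun p => deriv f p.1 * φ p.2) (s, x))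
      ((volume.restrict (Ioi m)).prod μ) :=
    (Integrable.mul_prod hint hφ).indicator
      (measurableSet_lt measurable_fst measurable_snd.norm)
  have hleft : ∀ s, deriv f s * ∫ x in {x : E | s < ‖x‖}, φ x ∂μ =
      ∫ x, {p : ℝ × E | p.1 < ‖p.2‖}.indicator (fun p => deriv f p.1 * φ p.2) (s, x) ∂μ := by
    intro s
    rw [← integral_const_mul, ← integral_indicator (hmeas s)]
    rfl
  simp_rw [hleft]
  rw [integral_integral_swap hprod, ← integral_indicator (hmeas m)]
  congr 1
  ext x
  have hright : ∫ s in Ioi m,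
      {p : ℝ × E | p.1 < ‖p.2‖}.indicator (fun p => deriv f p.1 * φ p.2) (s, x) =
      ∫ s in Ioi m ∩ Iio ‖x‖, deriv f s * φ x := by
    rw [← setIntegral_indicator measurableSet_Iio]
    rfl
  rw [hright, Ioi_inter_Iio, integral_mul_const]
  by_cases hx : m < ‖x‖
  · rw [indicator_of_mem (by exact hx), ← integral_Ioc_eq_integral_Ioo,
      ← intervalIntegral.integral_of_le hx.le, intervalIntegral.integral_deriv_eq_sub
      (fun s _ => hf.differentiable_one s)
      (hf.continuous_deriv_one.intervalIntegrable _ _), hfm, sub_zero]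
  · rw [indicator_of_notMem (by exact hx), Ioo_eq_empty hx]
    simp

/-- The radial profile of a Schwartz function along a unit direction. -/
noncomputable def SchwartzMap.radialProfile {E : Type*} [NormedAddCommGroup E] [NormedSpace ℝ E]
    (u : SchwartzMap E ℂ) (e : E) (he : ‖e‖ = 1) : SchwartzMap ℝ ℂ :=
  SchwartzMap.compCLMOfAntilipschitz ℝ (K := 1) (g := fun t : ℝ => t • e)
    (ContinuousLinearMap.toSpanSingleton ℝ e).hasTemperateGrowth
    (AntilipschitzWith.of_le_mul_dist fun s t => by
      simp [dist_eq_norm, ← sub_smul, norm_smul, he]) u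

lemma SchwartzMap.fderiv_radial {E : Type*} [NormedAddCommGroup E] [NormedSpace ℝ E]
    (u : SchwartzMap E ℂ) (hu : ∀ x y : E, ‖x‖ = ‖y‖ → u x = u y) (e : E) (he : ‖e‖ = 1)
    {x : E} (hx : x ≠ 0) :
    fderiv ℝ (fun y => u y) x (‖x‖⁻¹ • x) = deriv (u.radialProfile e he) ‖x‖ := by
  have hx' : ‖x‖ ≠ 0 := norm_ne_zero_iff.2 hx
  have hfun : (u.radialProfile e he : ℝ → ℂ) = fun t => u (t • (‖x‖⁻¹ • x)) := by
    ext t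
    refine hu (t • e) _ ?_
    simp [norm_smul, he, hx']
  have hline : HasDerivAt (fun t : ℝ => t • (‖x‖⁻¹ • x)) (‖x‖⁻¹ • x) ‖x‖ := by
    simpa using (hasDerivAt_id ‖x‖).smul_const (‖x‖⁻¹ • x)
  have hxx : ‖x‖ • (‖x‖⁻¹ • x) = x := smul_inv_smul₀ hx' x
  have hu' : HasFDerivAt (fun y => u y) (fderiv ℝ (fun y => u y) x) (‖x‖ • (‖x‖⁻¹ • x)) := by
    rw [hxx]; exact u.differentiable.differentiableAt.hasFDerivAt
  rw [hfun]
  exact (hu'.comp_hasDerivAt ‖x‖ hline).deriv.symm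

/-- Estimate (Eqn:FubInteg2): the weighted exterior `L⁶` integral of a radial
Schwartz function is controlled by the derivative of the weight applied to the
exterior `L⁶` norms, and in turn by `m⁻⁴‖u‖⁴_{L²}` times the weighted gradient
integral. -/
theorem stmt17 : ∃ C > (0 : ℝ),
    ∀ u : SchwartzMap (EuclideanSpace ℝ (Fin 3)) ℂ,
    (∀ x y : EuclideanSpace ℝ (Fin 3), ‖x‖ = ‖y‖ → u x = u y) →
    ∀ f₀ : ℝ → ℝ, ∀ m : ℝ, 0 < m →
    ContDiff ℝ 1 f₀ →
    (∀ s, 0 ≤ f₀ s) → (∀ s ∈ Icc (0 : ℝ) m, f₀ s = 0) →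
    MonotoneOn f₀ (Ici (0 : ℝ)) → (∃ B : ℝ, ∀ s, f₀ s ≤ B) →
      ((∫ x in {x : EuclideanSpace ℝ (Fin 3) | m < ‖x‖},
          f₀ ‖x‖ * ‖u x‖ ^ 6) ≤
        C * ∫ s in Ioi m, deriv f₀ s *
          ∫ x in {x : EuclideanSpace ℝ (Fin 3) | s < ‖x‖}, ‖u x‖ ^ 6) ∧
      ((∫ x in {x : EuclideanSpace ℝ (Fin 3) | m < ‖x‖},
          f₀ ‖x‖ * ‖u x‖ ^ 6) ≤
        C / m ^ 4 * (∫ x : EuclideanSpace ℝ (Fin 3), ‖u x‖ ^ 2) ^ 2 *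
          ∫ x in {x : EuclideanSpace ℝ (Fin 3) | m < ‖x‖},
            f₀ ‖x‖ * ‖fderiv ℝ (fun y => u y) x (‖x‖⁻¹ • x)‖ ^ 2) := by
  set V := volume.real (Metric.ball (0 : EuclideanSpace ℝ (Fin 3)) 1) with hV
  have hVpos : 0 < V := ENNReal.toReal_pos (Metric.measure_ball_pos _ _ one_pos).ne'
    measure_ball_lt_top.ne
  have hpolar : ∀ F : ℝ → ℝ, ∫ x : EuclideanSpace ℝ (Fin 3), F ‖x‖ =
      3 * V * ∫ s in Ioi (0 : ℝ), s ^ 2 * F s := fun F => by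
    rw [integral_fun_norm_addHaar]
    simp [mul_assoc, hV]
  refine ⟨1 + 4 / (3 * V) ^ 2, by positivity, ?_⟩
  intro u hu f₀ m hm hf hf0 hfm hmono ⟨B, hB⟩
  obtain ⟨hint, hpos⟩ := integrableOn_deriv_of_monotoneOn_of_bounded hm.le
    hf.differentiable_one hmono hB
  have hC : 0 ≤ 4 / (3 * V) ^ 2 := by positivity
  constructor
  · have hu6 : Integrable fun x => ‖u x‖ ^ 6 := (u.memLp 6).integrable_norm_pow (by norm_num)
    rw [setIntegral_weight_norm_mul_eq hf (hfm m ⟨hm.le, le_rfl⟩) hint hu6]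
    refine le_mul_of_one_le_left ?_ (by linarith)
    exact setIntegral_nonneg measurableSet_Ioi fun s hs =>
      mul_nonneg (hpos s hs) (integral_nonneg fun x => by positivity)
  · obtain ⟨e, he⟩ := exists_norm_eq (EuclideanSpace ℝ (Fin 3)) zero_le_one
    set g := u.radialProfile e he
    have hug : ∀ x, u x = g ‖x‖ := fun x => hu x (‖x‖ • e) (by simp [norm_smul, he])
    have hfull : ∀ F : EuclideanSpace ℝ (Fin 3) → ℝ,
        ∫ x in {x : EuclideanSpace ℝ (Fin 3) | m < ‖x‖}, f₀ ‖x‖ * F x = ∫ x, f₀ ‖x‖ * F x :=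
      fun F => setIntegral_eq_integral_of_forall_compl_eq_zero fun x hx => by
        rw [hfm ‖x‖ ⟨norm_nonneg x, not_lt.1 hx⟩, zero_mul]
    have hJ : ∫ x : EuclideanSpace ℝ (Fin 3), f₀ ‖x‖ * ‖u x‖ ^ 6 =
        3 * V * ∫ s in Ioi (0 : ℝ), s ^ 2 * (f₀ s * ‖g s‖ ^ 6) := by
      simp_rw [hug]
      exact hpolar fun s => f₀ s * ‖g s‖ ^ 6
    have hN : ∫ x : EuclideanSpace ℝ (Fin 3), ‖u x‖ ^ 2 =
        3 * V * ∫ s in Ioi (0 : ℝ), s ^ 2 * ‖g s‖ ^ 2 := by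
      simp_rw [hug]
      exact hpolar fun s => ‖g s‖ ^ 2
    have hG : ∫ x : EuclideanSpace ℝ (Fin 3),
          f₀ ‖x‖ * ‖fderiv ℝ (fun y => u y) x (‖x‖⁻¹ • x)‖ ^ 2 =
        3 * V * ∫ s in Ioi (0 : ℝ), s ^ 2 * (f₀ s * ‖deriv g s‖ ^ 2) := by
      rw [← hpolar fun s => f₀ s * ‖deriv g s‖ ^ 2]
      congr 1
      ext x
      by_cases hx : x = 0
      · simp [hx, hfm 0 ⟨le_rfl, hm.le⟩]
      · rw [u.fderiv_radial hu e he hx]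
    rw [hfull, hfull, hJ, hN, hG]
    have h1D := g.integral_weight_mul_norm_pow_six_le hm hf.continuous hf0 hfm hmono hB
    set J := ∫ s in Ioi (0 : ℝ), s ^ 2 * (f₀ s * ‖g s‖ ^ 6)
    set N := ∫ s in Ioi (0 : ℝ), s ^ 2 * ‖g s‖ ^ 2
    set G := ∫ s in Ioi (0 : ℝ), s ^ 2 * (f₀ s * ‖deriv g s‖ ^ 2)
    have hG0 : 0 ≤ G := integral_nonneg fun s => by
      have := hf0 s
      simp only [Pi.zero_apply]
      positivity
    calc 3 * V * J ≤ 3 * V * (4 / m ^ 4 * N ^ 2 * G) := by gcongr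
      _ = 4 / (3 * V) ^ 2 / m ^ 4 * (3 * V * N) ^ 2 * (3 * V * G) := by field_simp
      _ ≤ (1 + 4 / (3 * V) ^ 2) / m ^ 4 * (3 * V * N) ^ 2 * (3 * V * G) := by
        gcongr
        linarith
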